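/- Let (X_i)_{i≥1} be i.i.d. standard normal and X_{(n)} = max_{1≤i≤n} X_i. Let b_n > 0 satisfy 2π b_n² exp(b_n²) = n² and set Y_n = b_n(X_{(n)} - b_n). Then, as n → ∞, the W₁ Wasserstein distance satisfies W₁(L(Y_n), Λ) = ((6(γ² + 2γ + 2) + π²)/(24 log n))(1 + o(1)), where γ is the Euler–Mascheroni constant and Λ is the standard Gumbel distribution. -/

import Mathlib

open MeasureTheory Filter Real

/-- The standard normal cumulative distribution function. -/
noncomputable def stdNormalCDF (x : ℝ) : ℝ :=
  ∫ t in Set.Iic x, Real.exp (-t ^ 2 / 2) / Real.sqrt (2 * Real.pi)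

/-- The standard normal density. -/
noncomputable def stdNormalPDF (x : ℝ) : ℝ :=
  Real.exp (-x ^ 2 / 2) / Real.sqrt (2 * Real.pi)

/-- Scaling constant `a_n = √(2 log n)`. -/
noncomputable def aSeq (n : ℕ) : ℝ := Real.sqrt (2 * Real.log n)

/-- Centering constant
`b_n = √(2 log n) - (log log n + log (4π)) / (2 √(2 log n))`. -/
noncomputable def bSeq (n : ℕ) : ℝ :=
  aSeq n - (Real.log (Real.log n) + Real.log (4 * Real.pi)) / (2 * aSeq n)

/-- `c_n = log (√(4 π log n))`. -/
noncomputable def cSeq (n : ℕ) : ℝ := Real.log (Real.sqrt (4 * Real.pi * Real.log n))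

/-- The CDF of `Y_n = a_n (X_{(n)} - b_n)` where `X_{(n)}` is the maximum of `n`
i.i.d. standard normal random variables: `P(Y_n ≤ x) = Φ(b_n + x/a_n)^n`. -/
noncomputable def Fmax (n : ℕ) (x : ℝ) : ℝ := stdNormalCDF (bSeq n + x / aSeq n) ^ n

/-- The density of `Y_n = a_n (X_{(n)} - b_n)`:
`f_n(x) = n a_n⁻¹ φ(b_n + x/a_n) Φ(b_n + x/a_n)^{n-1}`. -/
noncomputable def fmax (n : ℕ) (x : ℝ) : ℝ :=
  n * (aSeq n)⁻¹ * stdNormalPDF (bSeq n + x / aSeq n) *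
    stdNormalCDF (bSeq n + x / aSeq n) ^ (n - 1)

/-- The density of the standard Gumbel distribution. -/
noncomputable def gumbelPDF (x : ℝ) : ℝ := Real.exp (-x - Real.exp (-x))

/-!
Writing `ε = 1 / b_n ^ 2`, the norming equation makes `n (1 - Φ (b_n + x / b_n))` equal to
`T = ∫_x^∞ exp (-u - ε u ^ 2 / 2) du = exp (-x) - ε exp (-x) (x ^ 2 / 2 + x + 1) + o(ε)`.
Since `Φ ^ n = (1 - T / n) ^ n` is `exp (-T)` up to `O(T ^ 2 / n) = o(ε)`, the difference of the two
distribution functions, multiplied by `b_n ^ 2`, converges pointwise to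
`Λ(x) exp (-x) (x ^ 2 / 2 + x + 1)`, and by domination so does its `L¹` norm. The limit is the
expectation of `x ^ 2 / 2 + x + 1` under the Gumbel law, whose moment generating function is
`Γ(1 - t)`: the mean is `γ`, and the reflection formula for `Γ` gives the second moment
`γ ^ 2 + π ^ 2 / 6`. Finally `b_n ^ 2 ~ 2 log n`.
-/

open ProbabilityTheory Set Topology

section Substitution

variable {E : Type*} [NormedAddCommGroup E] [NormedSpace ℝ E]

lemma image_exp_neg_univ : (fun x : ℝ => exp (-x)) '' univ = Ioi 0 := by
  rw [image_univ, ← range_exp]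
  exact neg_surjective.range_comp exp

lemma hasDerivAt_exp_neg (x : ℝ) : HasDerivAt (fun x : ℝ => exp (-x)) (-exp (-x)) x := by
  simpa using (hasDerivAt_neg x).exp

lemma antitone_exp_neg : Antitone fun x : ℝ => exp (-x) :=
  exp_monotone.comp_antitone fun _ _ h => neg_le_neg h

lemma integral_exp_neg_smul_comp_exp_neg (g : ℝ → E) :
    ∫ x : ℝ, exp (-x) • g (exp (-x)) = ∫ y in Ioi 0, g y := by
  simpa only [image_exp_neg_univ, neg_neg, Measure.restrict_univ] using
    (integral_image_eq_integral_deriv_smul_of_antitoneOn MeasurableSet.univ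
      (fun x _ => (hasDerivAt_exp_neg x).hasDerivWithinAt) (antitone_exp_neg.antitoneOn _) g).symm

lemma integrable_exp_neg_smul_comp_exp_neg_iff (g : ℝ → E) :
    Integrable (fun x : ℝ => exp (-x) • g (exp (-x))) ↔ IntegrableOn g (Ioi 0) := by
  simpa only [image_exp_neg_univ, neg_neg, integrableOn_univ] using
    (integrableOn_image_iff_integrableOn_deriv_smul_of_antitoneOn MeasurableSet.univ
      (fun x _ => (hasDerivAt_exp_neg x).hasDerivWithinAt) (antitone_exp_neg.antitoneOn _) g).symm

lemma integral_Ioi_add_div (f : ℝ → E) (a x : ℝ) {b : ℝ} (hb : 0 < b) :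
    ∫ t in Ioi (a + x / b), f t = b⁻¹ • ∫ u in Ioi x, f (a + u / b) := by
  have translate : ∫ s in Ioi (x / b), f (a + s) = ∫ t in Ioi (a + x / b), f t := by
    simpa using (measurePreserving_add_left volume a).setIntegral_preimage_emb
      (measurableEmbedding_addLeft a) f (Ioi (a + x / b))
  have scale := integral_comp_mul_left_Ioi (fun s => f (a + s)) x (inv_pos.2 hb)
  simp only [inv_inv, inv_mul_eq_div, translate] at scale
  rw [scale, inv_smul_smul₀ hb.ne']

end Substitution

section SecondMoment

lemma sin_pi_mul_Gamma_one_sub_mul_Gamma_one_add {t : ℝ} (ht : |t| < 1) :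
    sin (π * t) * (Gamma (1 - t) * Gamma (1 + t)) = π * t := by
  rcases eq_or_ne t 0 with rfl | ht₀
  · simp
  obtain ⟨ht₁, ht₂⟩ := abs_lt.1 ht
  have hsin : sin (π * t) ≠ 0 := by
    rw [Ne, sin_eq_zero_iff_of_lt_of_lt (by nlinarith [pi_pos]) (by nlinarith [pi_pos])]
    exact mul_ne_zero pi_ne_zero ht₀
  have reflection := Gamma_mul_Gamma_one_sub t
  rw [eq_div_iff hsin] at reflection
  rw [add_comm 1 t, Gamma_add_one ht₀]
  linear_combination t * reflection

lemma contDiffAt_comp_neg_zero {f : ℝ → ℝ} {n : WithTop ℕ∞} (hf : ContDiffAt ℝ n f 0) :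
    ContDiffAt ℝ n (fun t => f (-t)) 0 := by
  have hf' : ContDiffAt ℝ n f (-0) := by rwa [neg_zero]
  exact hf'.comp 0 contDiffAt_id.neg

lemma iteratedDeriv_two_mul_comp_neg {f : ℝ → ℝ} (hf : ContDiffAt ℝ 2 f 0) :
    iteratedDeriv 2 (fun t => f t * f (-t)) 0 =
      2 * (f 0 * iteratedDeriv 2 f 0 - deriv f 0 ^ 2) := by
  have key := iteratedDeriv_mul hf (contDiffAt_comp_neg_zero hf)
  simp only [Finset.sum_range_succ, Finset.sum_range_zero, iteratedDeriv_comp_neg, neg_zero,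
    iteratedDeriv_one, iteratedDeriv_zero, smul_eq_mul] at key
  simp only [Nat.choose] at key
  refine key.trans ?_
  norm_num
  ring

lemma iteratedDeriv_two_eq_of_sin_pi_mul_eq {g : ℝ → ℝ} (hg : ContDiffAt ℝ 3 g 0)
    (h : ∀ᶠ t in 𝓝 0, sin (π * t) * g t = π * t) :
    iteratedDeriv 2 g 0 = π ^ 2 / 3 * g 0 := by
  have hsin (k : ℕ) :
      iteratedDeriv k (fun t => sin (π * t)) 0 = π ^ k * iteratedDeriv k sin 0 := by
    simp [iteratedDeriv_comp_const_mul contDiff_sin]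
  have third_deriv : iteratedDeriv 3 (fun t => sin (π * t) * g t) 0 = 0 := by
    rw [EventuallyEq.iteratedDeriv_eq 3 h]
    simp [iteratedDeriv_succ]
  have leibniz := iteratedDeriv_mul (f := fun t => sin (π * t)) (n := 3) (x := 0)
    (by fun_prop) hg
  simp only [Finset.sum_range_succ, Finset.sum_range_zero, hsin] at leibniz
  have sin_derivs : iteratedDeriv 0 sin 0 = 0 ∧ iteratedDeriv 1 sin 0 = 1 ∧
      iteratedDeriv 2 sin 0 = 0 ∧ iteratedDeriv 3 sin 0 = -1 := by
    simp [iteratedDeriv_succ]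
  obtain ⟨sin₀, sin₁, sin₂, sin₃⟩ := sin_derivs
  have expansion := third_deriv.symm.trans leibniz
  simp only [sin₀, sin₁, sin₂, sin₃, Nat.choose] at expansion
  have : π * (iteratedDeriv 2 g 0 - π ^ 2 / 3 * g 0) = 0 := by
    norm_num at expansion
    linear_combination -expansion / 3
  linarith [(mul_eq_zero.1 this).resolve_left pi_ne_zero]

end SecondMoment

section GumbelMoments

/-- The standard Gumbel distribution `Λ`. -/
noncomputable def gumbelMeasure : Measure ℝ :=
  volume.withDensity fun x => ENNReal.ofReal (gumbelPDF x)

lemma measurable_ofReal_gumbelPDF : Measurable fun x => ENNReal.ofReal (gumbelPDF x) := by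
  unfold gumbelPDF
  fun_prop

lemma toReal_ofReal_gumbelPDF (x : ℝ) : (ENNReal.ofReal (gumbelPDF x)).toReal = gumbelPDF x :=
  ENNReal.toReal_ofReal (exp_nonneg _)

lemma integral_gumbelMeasure (f : ℝ → ℝ) :
    ∫ x, f x ∂gumbelMeasure = ∫ x, gumbelPDF x * f x := by
  simp only [gumbelMeasure, integral_withDensity_eq_integral_toReal_smul
    measurable_ofReal_gumbelPDF (ae_of_all _ fun _ => ENNReal.ofReal_lt_top),
    toReal_ofReal_gumbelPDF, smul_eq_mul]

lemma integrable_gumbelMeasure_iff (f : ℝ → ℝ) :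
    Integrable f gumbelMeasure ↔ Integrable fun x => gumbelPDF x * f x := by
  simp only [gumbelMeasure, integrable_withDensity_iff_integrable_smul'
    measurable_ofReal_gumbelPDF (ae_of_all _ fun _ => ENNReal.ofReal_lt_top),
    toReal_ofReal_gumbelPDF, smul_eq_mul]

lemma gumbelPDF_mul_exp (t x : ℝ) :
    gumbelPDF x * exp (t * x) = exp (-x) • (exp (-exp (-x)) * exp (-x) ^ (1 - t - 1)) := by
  rw [gumbelPDF, smul_eq_mul, ← exp_mul, ← exp_add, ← exp_add, ← exp_add]
  ring_nf

lemma integrable_exp_mul_gumbelMeasure {t : ℝ} (ht : t < 1) :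
    Integrable (fun x => exp (t * x)) gumbelMeasure := by
  simp only [integrable_gumbelMeasure_iff, gumbelPDF_mul_exp]
  exact (integrable_exp_neg_smul_comp_exp_neg_iff fun y => exp (-y) * y ^ (1 - t - 1)).2
    (GammaIntegral_convergent (sub_pos.2 ht))

lemma mgf_id_gumbelMeasure {t : ℝ} (ht : t < 1) : mgf id gumbelMeasure t = Gamma (1 - t) := by
  simp only [mgf, id_eq, integral_gumbelMeasure, gumbelPDF_mul_exp]
  rw [Gamma_eq_integral (sub_pos.2 ht)]
  exact integral_exp_neg_smul_comp_exp_neg fun y => exp (-y) * y ^ (1 - t - 1)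

lemma zero_mem_interior_integrableExpSet_gumbelMeasure :
    0 ∈ interior (integrableExpSet id gumbelMeasure) :=
  mem_interior.2
    ⟨Iio 1, fun _ => integrable_exp_mul_gumbelMeasure, isOpen_Iio, mem_Iio.2 zero_lt_one⟩

lemma deriv_mgf_gumbelMeasure_zero : deriv (mgf id gumbelMeasure) 0 = eulerMascheroniConstant := by
  have hΓ : HasDerivAt (fun t : ℝ => Gamma (1 - t)) eulerMascheroniConstant 0 := by
    have : HasDerivAt Gamma (-eulerMascheroniConstant) (1 - 0) := by
      simpa using hasDerivAt_Gamma_one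
    simpa using this.comp_const_sub 1 0
  refine (hΓ.congr_of_eventuallyEq ?_).deriv
  filter_upwards [Iio_mem_nhds zero_lt_one] with t ht using mgf_id_gumbelMeasure ht

-- The reflection formula for `Γ` turns the mgf of `Λ` times its reflection into `πt / sin (πt)`.
lemma iteratedDeriv_two_mgf_gumbelMeasure_zero :
    iteratedDeriv 2 (mgf id gumbelMeasure) 0 = eulerMascheroniConstant ^ 2 + π ^ 2 / 6 := by
  set M := mgf id gumbelMeasure
  have hM (k : ℕ) : ContDiffAt ℝ k M 0 :=
    (analyticAt_mgf zero_mem_interior_integrableExpSet_gumbelMeasure).contDiffAt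
  have hM_eq {t : ℝ} (ht : t < 1) : M t = Gamma (1 - t) := mgf_id_gumbelMeasure ht
  have hM_zero : M 0 = 1 := by rw [hM_eq zero_lt_one, sub_zero, Gamma_one]
  have reflection : ∀ᶠ t in 𝓝 0, sin (π * t) * (M t * M (-t)) = π * t := by
    filter_upwards [Ioo_mem_nhds neg_one_lt_zero zero_lt_one] with t ht
    rw [hM_eq ht.2, hM_eq (neg_lt.1 ht.1), sub_neg_eq_add]
    exact sin_pi_mul_Gamma_one_sub_mul_Gamma_one_add (abs_lt.2 ht)
  have second_deriv := iteratedDeriv_two_eq_of_sin_pi_mul_eq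
    ((hM 3).mul (contDiffAt_comp_neg_zero (hM 3))) reflection
  rw [iteratedDeriv_two_mul_comp_neg (hM 2), deriv_mgf_gumbelMeasure_zero, neg_zero, hM_zero]
    at second_deriv
  linarith

lemma integrable_pow_gumbelMeasure (k : ℕ) : Integrable (fun x => x ^ k) gumbelMeasure :=
  integrable_pow_of_mem_interior_integrableExpSet
    zero_mem_interior_integrableExpSet_gumbelMeasure k

lemma iteratedDeriv_mgf_gumbelMeasure_zero (k : ℕ) :
    iteratedDeriv k (mgf id gumbelMeasure) 0 = ∫ x, x ^ k ∂gumbelMeasure :=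
  iteratedDeriv_mgf_zero zero_mem_interior_integrableExpSet_gumbelMeasure k

lemma integral_quadratic_gumbelMeasure (a b c : ℝ) :
    ∫ x, (a * x ^ 2 + b * x + c) ∂gumbelMeasure =
      a * (eulerMascheroniConstant ^ 2 + π ^ 2 / 6) + b * eulerMascheroniConstant + c := by
  have moment₀ := iteratedDeriv_mgf_gumbelMeasure_zero 0
  have moment₁ := iteratedDeriv_mgf_gumbelMeasure_zero 1
  have moment₂ := iteratedDeriv_mgf_gumbelMeasure_zero 2
  rw [iteratedDeriv_zero, mgf_id_gumbelMeasure zero_lt_one, sub_zero, Gamma_one] at moment₀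
  rw [iteratedDeriv_one, deriv_mgf_gumbelMeasure_zero] at moment₁
  rw [iteratedDeriv_two_mgf_gumbelMeasure_zero] at moment₂
  have int₀ := (integrable_pow_gumbelMeasure 0).const_mul c
  have int₁ := (integrable_pow_gumbelMeasure 1).const_mul b
  have int₂ := (integrable_pow_gumbelMeasure 2).const_mul a
  calc ∫ x, (a * x ^ 2 + b * x + c) ∂gumbelMeasure
      = ∫ x, (a * x ^ 2 + b * x ^ 1 + c * x ^ 0) ∂gumbelMeasure := by simp
    _ = a * ∫ x, x ^ 2 ∂gumbelMeasure + b * ∫ x, x ^ 1 ∂gumbelMeasure +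
          c * ∫ x, x ^ 0 ∂gumbelMeasure := by
      rw [integral_add (by exact int₂.add int₁) int₀, integral_add int₂ int₁]
      simp only [integral_const_mul]
    _ = _ := by rw [← moment₀, ← moment₁, ← moment₂, mul_one]

end GumbelMoments

section ExceedanceRate

variable {ε x : ℝ}

/-- The mean number `n (1 - Φ (b + x / b))` of exceedances of the level `b + x / b` by `n` standard
normals, where `b` solves the norming equation for `n` and `ε = 1 / b ^ 2`. -/
noncomputable def exceedanceRate (ε x : ℝ) : ℝ :=
  ∫ u in Ioi x, exp (-u) * exp (-(ε * (u ^ 2 / 2)))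

/-- The coefficient of `-ε` in the expansion of `exceedanceRate ε x` around
`exceedanceRate 0 x = exp (-x)`. -/
noncomputable def exceedanceDeficit (x : ℝ) : ℝ :=
  exp (-x) * (x ^ 2 / 2 + x + 1)

lemma exceedanceDeficit_nonneg (x : ℝ) : 0 ≤ exceedanceDeficit x :=
  mul_nonneg (exp_nonneg _) (by nlinarith [sq_nonneg (x + 1)])

lemma hasDerivAt_neg_exceedanceDeficit (x : ℝ) :
    HasDerivAt (fun x => -exceedanceDeficit x) (exp (-x) * (x ^ 2 / 2)) x := by
  have hpoly : HasDerivAt (fun x : ℝ => x ^ 2 / 2 + x + 1) (x + 1) x := by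
    simpa using (((hasDerivAt_pow 2 x).div_const 2).add (hasDerivAt_id x)).add_const 1
  exact ((hasDerivAt_exp_neg x).mul hpoly).neg.congr_deriv (by ring)

lemma tendsto_exceedanceDeficit_atTop : Tendsto exceedanceDeficit atTop (𝓝 0) := by
  have hpow (k : ℕ) := tendsto_pow_mul_exp_neg_atTop_nhds_zero k
  have := (((hpow 2).div_const 2).add (hpow 1)).add (hpow 0)
  simp only [zero_div, add_zero] at this
  exact this.congr fun x => by rw [exceedanceDeficit]; ring

lemma integrableOn_exp_neg_mul_sq_div_two (x : ℝ) :
    IntegrableOn (fun u => exp (-u) * (u ^ 2 / 2)) (Ioi x) :=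
  integrableOn_Ioi_deriv_of_nonneg' (fun u _ => hasDerivAt_neg_exceedanceDeficit u)
    (fun _ _ => by positivity) tendsto_exceedanceDeficit_atTop.neg

lemma integral_Ioi_exp_neg_mul_sq_div_two (x : ℝ) :
    ∫ u in Ioi x, exp (-u) * (u ^ 2 / 2) = exceedanceDeficit x := by
  simpa using integral_Ioi_of_hasDerivAt_of_nonneg'
    (fun u _ => hasDerivAt_neg_exceedanceDeficit u) (fun _ _ => by positivity)
    tendsto_exceedanceDeficit_atTop.neg (a := x)

lemma integrableOn_exceedanceRate (hε : 0 ≤ ε) (x : ℝ) :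
    IntegrableOn (fun u => exp (-u) * exp (-(ε * (u ^ 2 / 2)))) (Ioi x) := by
  refine (integrableOn_exp_neg_Ioi x).mono' (by fun_prop) (ae_of_all _ fun u => ?_)
  rw [norm_of_nonneg (by positivity)]
  exact mul_le_of_le_one_right (exp_nonneg _) (exp_le_one_iff.2 (neg_nonpos.2 (by positivity)))

lemma exceedanceRate_nonneg (ε x : ℝ) : 0 ≤ exceedanceRate ε x :=
  integral_nonneg fun _ => by positivity

lemma exceedanceRate_zero (x : ℝ) : exceedanceRate 0 x = exp (-x) := by
  simp only [exceedanceRate, zero_mul, neg_zero, exp_zero, mul_one, integral_exp_neg_Ioi]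

lemma exp_neg_sub_exceedanceRate (hε : 0 ≤ ε) (x : ℝ) :
    exp (-x) - exceedanceRate ε x =
      ∫ u in Ioi x, exp (-u) * (1 - exp (-(ε * (u ^ 2 / 2)))) := by
  simp only [mul_one_sub]
  rw [integral_sub (integrableOn_exp_neg_Ioi x) (integrableOn_exceedanceRate hε x),
    integral_exp_neg_Ioi, exceedanceRate]

lemma one_sub_exp_neg_mul_sq_mem_Icc (hε : 0 ≤ ε) (u : ℝ) :
    1 - exp (-(ε * (u ^ 2 / 2))) ∈ Icc 0 (ε * (u ^ 2 / 2)) := by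
  constructor
  · rw [sub_nonneg, exp_le_one_iff, neg_nonpos]
    positivity
  · linarith [one_sub_le_exp_neg (ε * (u ^ 2 / 2))]

lemma exceedanceRate_le_exp_neg (hε : 0 ≤ ε) (x : ℝ) : exceedanceRate ε x ≤ exp (-x) := by
  rw [← sub_nonneg, exp_neg_sub_exceedanceRate hε]
  exact integral_nonneg fun u =>
    mul_nonneg (exp_nonneg _) (one_sub_exp_neg_mul_sq_mem_Icc hε u).1

lemma exp_neg_sub_exceedanceRate_le (hε : 0 ≤ ε) (x : ℝ) :
    exp (-x) - exceedanceRate ε x ≤ ε * exceedanceDeficit x := by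
  rw [exp_neg_sub_exceedanceRate hε, ← integral_Ioi_exp_neg_mul_sq_div_two, ← integral_const_mul]
  refine integral_mono_of_nonneg
    (ae_of_all _ fun u => mul_nonneg (exp_nonneg _) (one_sub_exp_neg_mul_sq_mem_Icc hε u).1)
    ((integrableOn_exp_neg_mul_sq_div_two x).const_mul ε) (ae_of_all _ fun u => ?_)
  exact (mul_le_mul_of_nonneg_left (one_sub_exp_neg_mul_sq_mem_Icc hε u).2
    (exp_nonneg _)).trans_eq (mul_left_comm _ _ _)

lemma tendsto_one_sub_exp_neg_mul_div (c : ℝ) :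
    Tendsto (fun ε => (1 - exp (-(ε * c))) / ε) (𝓝[>] 0) (𝓝 c) := by
  have hderiv : HasDerivAt (fun ε => 1 - exp (-(ε * c))) c 0 := by
    simpa using ((hasDerivAt_mul_const c).neg.exp.const_sub 1 : HasDerivAt _ _ (0 : ℝ))
  simpa [inv_mul_eq_div] using hderiv.tendsto_slope_zero_right

lemma tendsto_exp_neg_sub_exceedanceRate_div (x : ℝ) :
    Tendsto (fun ε => (exp (-x) - exceedanceRate ε x) / ε) (𝓝[>] 0) (𝓝 (exceedanceDeficit x)) := by
  have hintegral : (fun ε => ∫ u in Ioi x, exp (-u) * ((1 - exp (-(ε * (u ^ 2 / 2)))) / ε))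
      =ᶠ[𝓝[>] 0] fun ε => (exp (-x) - exceedanceRate ε x) / ε := by
    filter_upwards [self_mem_nhdsWithin] with ε hε
    simp only [exp_neg_sub_exceedanceRate (mem_Ioi.1 hε).le, ← integral_div, mul_div_assoc]
  rw [← integral_Ioi_exp_neg_mul_sq_div_two]
  refine (tendsto_integral_filter_of_dominated_convergence _ (Eventually.of_forall fun ε =>
    by fun_prop) ?_ (integrableOn_exp_neg_mul_sq_div_two x) (ae_of_all _ fun u =>
      (tendsto_one_sub_exp_neg_mul_div _).const_mul _)).congr' hintegral
  filter_upwards [self_mem_nhdsWithin] with ε hε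
  refine ae_of_all _ fun u => ?_
  have hbounds := one_sub_exp_neg_mul_sq_mem_Icc (mem_Ioi.1 hε).le u
  rw [norm_of_nonneg (mul_nonneg (exp_nonneg _) (div_nonneg hbounds.1 (mem_Ioi.1 hε).le))]
  exact mul_le_mul_of_nonneg_left ((div_le_iff₀' hε).2 hbounds.2) (exp_nonneg _)

lemma hasDerivWithinAt_exceedanceRate_zero (x : ℝ) :
    HasDerivWithinAt (fun ε => exceedanceRate ε x) (-exceedanceDeficit x) (Ioi 0) 0 := by
  rw [hasDerivWithinAt_iff_tendsto_slope' self_notMem_Ioi]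
  refine (tendsto_exp_neg_sub_exceedanceRate_div x).neg.congr fun ε => ?_
  rw [slope_def_field, exceedanceRate_zero, sub_zero, ← neg_div, neg_sub]

lemma integral_exp_neg_div_two_le_exceedanceRate (hε : 0 ≤ ε) (hx : x ≤ 0) (hεx : -2 ≤ ε * x) :
    ∫ u in Ioc (x / 2) 0, exp (-(u / 2)) ≤ exceedanceRate ε x := by
  have hsub : Ioc (x / 2) 0 ⊆ Ioi x := Ioc_subset_Ioi_self.trans (Ioi_subset_Ioi (by linarith))
  have hrate := integrableOn_exceedanceRate hε x
  have hlower : IntegrableOn (fun u : ℝ => exp (-(u / 2))) (Ioc (x / 2) 0) :=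
    Continuous.integrableOn_Ioc (by fun_prop)
  refine (setIntegral_mono_on hlower (hrate.mono_set hsub) measurableSet_Ioc fun u hu => ?_).trans
    (setIntegral_mono_set hrate (ae_of_all _ fun _ => by positivity) hsub.eventuallyLE)
  rw [← exp_add, exp_le_exp]
  have hεu : -1 ≤ ε * u := by nlinarith [hu.1]
  nlinarith [mul_nonneg (neg_nonneg.2 hu.2) (neg_le_iff_add_nonneg.1 hεu)]

-- Slope `3`, so that `exp (-exceedanceRate ε x)` outweighs the factor `exp (-2 * x)` for `x → -∞`.
lemma neg_three_mul_sub_le_exceedanceRate (hε : 0 ≤ ε) (hx : x ≤ 0) (hεx : -2 ≤ ε * x) :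
    -3 * x - 25 ≤ exceedanceRate ε x := by
  refine le_trans ?_ (integral_exp_neg_div_two_le_exceedanceRate hε hx hεx)
  have hintegral : ∫ u in Ioc (x / 2) 0, exp (-(u / 2)) = 2 * (exp (-x / 4) - 1) := by
    rw [← intervalIntegral.integral_of_le (by linarith),
      intervalIntegral.integral_comp_div (fun u => exp (-u)) two_ne_zero,
      intervalIntegral.integral_comp_neg, integral_exp, zero_div, neg_zero, exp_zero, smul_eq_mul]
    ring_nf
  rw [hintegral]
  nlinarith [quadratic_le_exp_of_nonneg (show 0 ≤ -x / 4 by linarith), sq_nonneg (-x / 4 - 5)]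

end ExceedanceRate

section NormalCDF

lemma gaussianPDFReal_zero_one (t : ℝ) : gaussianPDFReal 0 1 t = exp (-t ^ 2 / 2) / √(2 * π) := by
  rw [gaussianPDFReal, inv_mul_eq_div, NNReal.coe_one, sub_zero, mul_one, mul_one]

lemma stdNormalCDF_eq_cdf : stdNormalCDF = cdf (gaussianReal 0 1) := by
  ext x
  rw [cdf_eq_real, measureReal_def, gaussianReal_apply_eq_integral 0 one_ne_zero,
    ENNReal.toReal_ofReal (integral_nonneg (gaussianPDFReal_nonneg 0 1))]
  simp only [stdNormalCDF, gaussianPDFReal_zero_one]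

lemma stdNormalCDF_nonneg (x : ℝ) : 0 ≤ stdNormalCDF x :=
  stdNormalCDF_eq_cdf ▸ cdf_nonneg _ x

lemma stdNormalCDF_le_one (x : ℝ) : stdNormalCDF x ≤ 1 :=
  stdNormalCDF_eq_cdf ▸ cdf_le_one _ x

lemma measurable_stdNormalCDF : Measurable stdNormalCDF :=
  stdNormalCDF_eq_cdf ▸ (monotone_cdf _).measurable

lemma one_sub_stdNormalCDF (x : ℝ) :
    1 - stdNormalCDF x = ∫ t in Ioi x, exp (-t ^ 2 / 2) / √(2 * π) := by
  have hint := integrable_gaussianPDFReal 0 1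
  have htotal := integral_gaussianPDFReal_eq_one 0 one_ne_zero
  rw [← intervalIntegral.integral_Iic_add_Ioi (b := x) hint.integrableOn hint.integrableOn]
    at htotal
  simp only [gaussianPDFReal_zero_one] at htotal
  rw [← htotal, stdNormalCDF, add_sub_cancel_left]

lemma stdNormalCDF_le_exp {x : ℝ} (hx : x ≤ 0) : stdNormalCDF x ≤ exp (-x ^ 2 / 2) := by
  have chernoff := measure_le_le_exp_mul_mgf (X := id) (μ := gaussianReal 0 1) x hx
    (integrable_exp_mul_gaussianReal x)
  rw [mgf_id_gaussianReal, ← exp_add] at chernoff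
  rw [stdNormalCDF_eq_cdf, cdf_eq_real]
  refine chernoff.trans_eq ?_
  norm_num
  ring

end NormalCDF

section Norming

/-- `b` is the norming constant for the maximum of `n` standard normals: the solution of
`n * φ b = b`, with `φ` the standard normal density, in squared form. -/
structure IsNormingConstant (n : ℕ) (b : ℝ) : Prop where
  pos : 0 < b
  eq : 2 * π * b ^ 2 * exp (b ^ 2) = (n : ℝ) ^ 2

namespace IsNormingConstant

variable {n : ℕ} {b : ℝ}

lemma natCast_eq (h : IsNormingConstant n b) : (n : ℝ) = √(2 * π) * b * exp (b ^ 2 / 2) := by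
  have := h.pos
  rw [← sq_eq_sq₀ n.cast_nonneg (by positivity), ← h.eq, mul_pow, mul_pow, ← exp_nat_mul,
    sq_sqrt (by positivity)]
  ring_nf

lemma natCast_pos (h : IsNormingConstant n b) : (0 : ℝ) < n := by
  have := h.pos
  rw [h.natCast_eq]
  positivity

lemma natCast_mul_one_sub_stdNormalCDF (h : IsNormingConstant n b) (x : ℝ) :
    n * (1 - stdNormalCDF (b + x / b)) = exceedanceRate (1 / b ^ 2) x := by
  have hb := h.pos
  have density (u : ℝ) : exp (-(b + u / b) ^ 2 / 2) / √(2 * π) =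
      exp (-(b ^ 2 / 2)) / √(2 * π) * (exp (-u) * exp (-(1 / b ^ 2 * (u ^ 2 / 2)))) := by
    rw [div_mul_eq_mul_div, ← exp_add, ← exp_add]
    congr 2
    field_simp
    ring
  rw [one_sub_stdNormalCDF, integral_Ioi_add_div _ _ _ hb, smul_eq_mul]
  simp only [density, integral_const_mul]
  rw [h.natCast_eq, exceedanceRate, exp_neg]
  field_simp

lemma pow_three_le_natCast (h : IsNormingConstant n b) : b ^ 3 ≤ n := by
  have hb := h.pos
  refine le_of_sq_le_sq ?_ n.cast_nonneg
  have hexp : b ^ 4 / 2 ≤ exp (b ^ 2) := by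
    nlinarith [quadratic_le_exp_of_nonneg (sq_nonneg b)]
  calc (b ^ 3) ^ 2 = 2 * b ^ 2 * (b ^ 4 / 2) := by ring
    _ ≤ 2 * π * b ^ 2 * exp (b ^ 2) := by
      gcongr
      linarith [pi_gt_three]
    _ = (n : ℝ) ^ 2 := h.eq

lemma four_le_natCast (h : IsNormingConstant n b) (hb : 1 ≤ b) : (4 : ℝ) ≤ n := by
  have hb_sq : 1 ≤ b ^ 2 := one_le_pow₀ hb
  refine le_of_sq_le_sq ?_ n.cast_nonneg
  calc (4 : ℝ) ^ 2 ≤ 2 * 3 * 1 * 2.7 := by norm_num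
    _ ≤ 2 * π * b ^ 2 * exp (b ^ 2) := by
      gcongr
      · exact pi_gt_three.le
      · linarith [exp_one_gt_d9, exp_le_exp.2 hb_sq]
    _ = (n : ℝ) ^ 2 := h.eq

lemma two_mul_log_natCast (h : IsNormingConstant n b) :
    2 * log n = b ^ 2 + log (2 * π * b ^ 2) := by
  have hb := h.pos
  calc 2 * log n = log ((n : ℝ) ^ 2) := by rw [log_pow, Nat.cast_ofNat]
    _ = b ^ 2 + log (2 * π * b ^ 2) := by
      rw [← h.eq, log_mul (by positivity) (exp_ne_zero _), log_exp, add_comm]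

end IsNormingConstant

section Asymptotics

variable {b : ℕ → ℝ}

lemma tendsto_atTop_of_isNormingConstant (hb : ∀ᶠ n in atTop, IsNormingConstant n (b n)) :
    Tendsto b atTop atTop := by
  have hlog : Tendsto (fun n : ℕ => 2 * log n / (1 + 2 * π)) atTop atTop :=
    ((tendsto_log_atTop.comp tendsto_natCast_atTop_atTop).const_mul_atTop two_pos).atTop_div_const
      (by positivity)
  refine tendsto_atTop_mono' _ ?_ (tendsto_sqrt_atTop.comp hlog)
  filter_upwards [hb] with n hn
  have := hn.pos
  refine sqrt_le_iff.2 ⟨this.le, ?_⟩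
  rw [div_le_iff₀ (by positivity), hn.two_mul_log_natCast]
  linarith [log_le_self (show 0 ≤ 2 * π * b n ^ 2 by positivity)]

lemma tendsto_two_mul_log_div_sq_of_isNormingConstant
    (hb : ∀ᶠ n in atTop, IsNormingConstant n (b n)) :
    Tendsto (fun n : ℕ => 2 * log n / b n ^ 2) atTop (𝓝 1) := by
  have hsq := ((tendsto_pow_atTop two_ne_zero).comp
    (tendsto_atTop_of_isNormingConstant hb)).const_mul_atTop (show 0 < 2 * π by positivity)
  have hlog : Tendsto (fun n => 1 + log (2 * π * b n ^ 2) / (2 * π * b n ^ 2) * (2 * π)) atTop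
      (𝓝 1) := by
    simpa using ((isLittleO_log_id_atTop.tendsto_div_nhds_zero.comp hsq).mul_const
      (2 * π)).const_add 1
  refine hlog.congr' ?_
  filter_upwards [hb] with n hn
  have := hn.pos
  rw [hn.two_mul_log_natCast]
  field_simp

end Asymptotics

end Norming

section PoissonApproximation

lemma one_sub_pow_le_exp_neg_mul {t : ℝ} (ht : t ≤ 1) (n : ℕ) : (1 - t) ^ n ≤ exp (-(n * t)) := by
  rw [← mul_neg, exp_nat_mul]
  exact pow_le_pow_left₀ (sub_nonneg.2 ht) (one_sub_le_exp_neg t) n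

lemma exp_neg_mul_sub_one_sub_pow_le {t : ℝ} (ht : |t| ≤ 1) (n : ℕ) :
    exp (-(n * t)) - (1 - t) ^ n ≤ n * t ^ 2 * exp (-(n * t)) := by
  obtain ⟨ht₁, ht₂⟩ := abs_le.1 ht
  have bernoulli : 1 - n * t ^ 2 ≤ (1 - t) ^ n * exp (n * t) :=
    calc 1 - n * t ^ 2 = 1 + n * -t ^ 2 := by ring
      _ ≤ (1 + -t ^ 2) ^ n := one_add_mul_le_pow (by nlinarith) n
      _ ≤ ((1 - t) * exp t) ^ n := by
        refine pow_le_pow_left₀ (by nlinarith) ?_ n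
        nlinarith [add_one_le_exp t]
      _ = (1 - t) ^ n * exp (n * t) := by rw [mul_pow, exp_nat_mul]
  have := mul_le_mul_of_nonneg_right bernoulli (exp_nonneg (-(n * t)))
  rw [mul_assoc, ← exp_add, add_neg_cancel, exp_zero] at this
  linarith

lemma exp_neg_sub_exp_neg_le (s t : ℝ) : exp (-s) - exp (-t) ≤ (t - s) * exp (-s) := by
  have := mul_le_mul_of_nonneg_right (one_sub_le_exp_neg (t - s)) (exp_nonneg (-s))
  rw [← exp_add, show -(t - s) + -s = -t by ring] at this
  linarith

namespace IsNormingConstant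

variable {n : ℕ} {b : ℝ}

lemma stdNormalCDF_pow_le (h : IsNormingConstant n b) (x : ℝ) :
    stdNormalCDF (b + x / b) ^ n ≤ exp (-exceedanceRate (1 / b ^ 2) x) := by
  simpa [h.natCast_mul_one_sub_stdNormalCDF] using
    one_sub_pow_le_exp_neg_mul (sub_le_self 1 (stdNormalCDF_nonneg (b + x / b))) n

lemma exp_neg_exceedanceRate_sub_stdNormalCDF_pow_le (h : IsNormingConstant n b) (x : ℝ) :
    exp (-exceedanceRate (1 / b ^ 2) x) - stdNormalCDF (b + x / b) ^ n ≤
      exp (-x) ^ 2 / n * exp (-exceedanceRate (1 / b ^ 2) x) := by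
  have hn := h.natCast_pos
  have hΦ₀ := stdNormalCDF_nonneg (b + x / b)
  have hΦ₁ := stdNormalCDF_le_one (b + x / b)
  have hpow := exp_neg_mul_sub_one_sub_pow_le
    (abs_le.2 ⟨by linarith, by linarith⟩ : |1 - stdNormalCDF (b + x / b)| ≤ 1) n
  have hsq : n * (1 - stdNormalCDF (b + x / b)) ^ 2 = exceedanceRate (1 / b ^ 2) x ^ 2 / n := by
    rw [← h.natCast_mul_one_sub_stdNormalCDF]
    field_simp
  rw [hsq, h.natCast_mul_one_sub_stdNormalCDF, sub_sub_cancel] at hpow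
  refine hpow.trans ?_
  gcongr
  · exact exceedanceRate_nonneg _ x
  · exact exceedanceRate_le_exp_neg (by positivity) x

lemma sq_mul_abs_stdNormalCDF_pow_sub_le (h : IsNormingConstant n b) (hb : b ^ 2 ≤ n) (x : ℝ) :
    b ^ 2 * |stdNormalCDF (b + x / b) ^ n - exp (-exp (-x))| ≤
      (exp (-x) ^ 2 + exceedanceDeficit x) * exp (-exceedanceRate (1 / b ^ 2) x) := by
  have hb₀ := h.pos
  have hn := h.natCast_pos
  set T := exceedanceRate (1 / b ^ 2) x
  have hT : T ≤ exp (-x) := exceedanceRate_le_exp_neg (by positivity) x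
  have hdeficit : b ^ 2 * (exp (-x) - T) ≤ exceedanceDeficit x := by
    have := exp_neg_sub_exceedanceRate_le (show 0 ≤ 1 / b ^ 2 by positivity) x
    rwa [div_mul_eq_mul_div, one_mul, le_div_iff₀' (by positivity)] at this
  have upper : b ^ 2 * (exp (-T) - exp (-exp (-x))) ≤ exceedanceDeficit x * exp (-T) :=
    calc _ ≤ b ^ 2 * ((exp (-x) - T) * exp (-T)) := by gcongr; exact exp_neg_sub_exp_neg_le _ _
      _ ≤ exceedanceDeficit x * exp (-T) := by rw [← mul_assoc]; gcongr
  have lower : b ^ 2 * (exp (-T) - stdNormalCDF (b + x / b) ^ n) ≤ exp (-x) ^ 2 * exp (-T) :=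
    calc _ ≤ n * (exp (-x) ^ 2 / n * exp (-T)) :=
        mul_le_mul hb (h.exp_neg_exceedanceRate_sub_stdNormalCDF_pow_le x)
          (sub_nonneg.2 (h.stdNormalCDF_pow_le x)) hn.le
      _ = exp (-x) ^ 2 * exp (-T) := by field_simp
  have hΦ : b ^ 2 * stdNormalCDF (b + x / b) ^ n ≤ b ^ 2 * exp (-T) := by
    gcongr
    exact h.stdNormalCDF_pow_le x
  have hΛ : b ^ 2 * exp (-exp (-x)) ≤ b ^ 2 * exp (-T) := by gcongr
  have hdeficit₀ := mul_nonneg (exceedanceDeficit_nonneg x) (exp_nonneg (-T))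
  have hsq₀ : 0 ≤ exp (-x) ^ 2 * exp (-T) := by positivity
  rw [← abs_of_pos (pow_pos hb₀ 2), ← abs_mul, abs_le]
  constructor <;> linarith [hdeficit₀, hsq₀]

end IsNormingConstant

end PoissonApproximation

section Domination

lemma integrable_comp_abs {E : Type*} [NormedAddCommGroup E] {f : ℝ → E}
    (hf : IntegrableOn f (Ioi 0)) : Integrable fun x => f |x| := by
  have hright : IntegrableOn (fun x => f |x|) (Ioi 0) :=
    hf.congr_fun (fun x hx => by rw [abs_of_pos (mem_Ioi.1 hx)]) measurableSet_Ioi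
  have hleft : IntegrableOn (fun x => f |x|) (Iic 0) := by
    rw [← neg_zero] at hright
    rw [integrableOn_Iic_iff_integrableOn_Iio]
    simpa only [abs_neg] using hright.comp_neg_Iio
  rw [← integrableOn_univ, ← Iic_union_Ioi (a := 0)]
  exact hleft.union hright

lemma integrable_one_add_sq_mul_exp_neg_abs :
    Integrable fun x : ℝ => (1 + x ^ 2) * exp (-|x|) := by
  have hright : IntegrableOn (fun x : ℝ => (1 + x ^ 2) * exp (-x)) (Ioi 0) := by
    have hsum := (integrableOn_exp_neg_Ioi 0).add
      ((integrableOn_exp_neg_mul_sq_div_two 0).const_mul 2)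
    exact hsum.congr_fun (fun x _ => by simp only [Pi.add_apply]; ring) measurableSet_Ioi
  simpa only [sq_abs] using integrable_comp_abs hright

lemma exp_neg_exp_neg_le_exp (x : ℝ) : exp (-exp (-x)) ≤ exp x :=
  exp_le_exp.2 (by linarith [add_one_le_exp (-x)])

namespace IsNormingConstant

variable {n : ℕ} {b x : ℝ}

lemma sq_mul_abs_stdNormalCDF_pow_sub_le_of_nonneg (h : IsNormingConstant n b) (hb : b ^ 2 ≤ n)
    (hx : 0 ≤ x) :
    b ^ 2 * |stdNormalCDF (b + x / b) ^ n - exp (-exp (-x))| ≤ 3 * ((1 + x ^ 2) * exp (-x)) := by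
  have hE : exp (-x) ≤ 1 := exp_le_one_iff.2 (neg_nonpos.2 hx)
  calc _ ≤ (exp (-x) ^ 2 + exceedanceDeficit x) * exp (-exceedanceRate (1 / b ^ 2) x) :=
        h.sq_mul_abs_stdNormalCDF_pow_sub_le hb x
    _ ≤ exp (-x) ^ 2 + exceedanceDeficit x :=
        mul_le_of_le_one_right (add_nonneg (sq_nonneg _) (exceedanceDeficit_nonneg x))
          (exp_le_one_iff.2 (neg_nonpos.2 (exceedanceRate_nonneg _ x)))
    _ = (exp (-x) + (x ^ 2 / 2 + x + 1)) * exp (-x) := by rw [exceedanceDeficit]; ring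
    _ ≤ (3 * (1 + x ^ 2)) * exp (-x) := by
        gcongr
        nlinarith [sq_nonneg (x - 1)]
    _ = 3 * ((1 + x ^ 2) * exp (-x)) := mul_assoc _ _ _

lemma sq_mul_abs_stdNormalCDF_pow_sub_le_of_nonpos (h : IsNormingConstant n b) (hb : b ^ 2 ≤ n)
    (hx : x ≤ 0) (hbx : -(2 * b ^ 2) ≤ x) :
    b ^ 2 * |stdNormalCDF (b + x / b) ^ n - exp (-exp (-x))| ≤
      3 * exp 25 * ((1 + x ^ 2) * exp x) := by
  have hb₀ := pow_pos h.pos 2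
  have hrate : -3 * x - 25 ≤ exceedanceRate (1 / b ^ 2) x := by
    refine neg_three_mul_sub_le_exceedanceRate (by positivity) hx ?_
    rw [div_mul_eq_mul_div, one_mul, le_div_iff₀ hb₀]
    linarith
  have hdecay : exp (-exceedanceRate (1 / b ^ 2) x) ≤ exp 25 * exp x ^ 3 := by
    rw [← exp_nat_mul, ← exp_add, exp_le_exp, Nat.cast_ofNat]
    linarith
  have hpoly : 0 ≤ x ^ 2 / 2 + x + 1 := by nlinarith [sq_nonneg (x + 1)]
  have hE : exp x ≤ 1 := exp_le_one_iff.2 hx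
  calc _ ≤ (exp (-x) ^ 2 + exceedanceDeficit x) * exp (-exceedanceRate (1 / b ^ 2) x) :=
        h.sq_mul_abs_stdNormalCDF_pow_sub_le hb x
    _ ≤ (exp (-x) ^ 2 + exceedanceDeficit x) * (exp 25 * exp x ^ 3) :=
        mul_le_mul_of_nonneg_left hdecay (add_nonneg (sq_nonneg _) (exceedanceDeficit_nonneg x))
    _ = exp 25 * exp x * (1 + exp x * (x ^ 2 / 2 + x + 1)) := by
        rw [exceedanceDeficit, exp_neg]
        field_simp
    _ ≤ exp 25 * exp x * (3 * (1 + x ^ 2)) := by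
        gcongr
        nlinarith [mul_le_of_le_one_left hpoly hE]
    _ = 3 * exp 25 * ((1 + x ^ 2) * exp x) := by ring

lemma stdNormalCDF_pow_le_exp (h : IsNormingConstant n b) (hb : 1 ≤ b) (hx : x ≤ -(2 * b ^ 2)) :
    stdNormalCDF (b + x / b) ^ n ≤ exp x := by
  have := h.pos
  have hhalf : b + x / b ≤ x / (2 * b) := by
    rw [← sub_nonneg, show x / (2 * b) - (b + x / b) = (-(2 * b ^ 2) - x) / (2 * b) by
      field_simp; ring]
    exact div_nonneg (by linarith) (by positivity)
  have hx₀ : x ≤ 0 := hx.trans (neg_nonpos.2 (by positivity))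
  have hneg : x / (2 * b) ≤ 0 := div_nonpos_of_nonpos_of_nonneg hx₀ (by positivity)
  have hsq : -x / 2 ≤ (x / (2 * b)) ^ 2 := by
    rw [div_pow, div_le_div_iff₀ two_pos (by positivity)]
    nlinarith
  have hsq' : (x / (2 * b)) ^ 2 ≤ (b + x / b) ^ 2 := by
    simpa only [neg_sq] using pow_le_pow_left₀ (neg_nonneg.2 hneg) (neg_le_neg hhalf) 2
  calc stdNormalCDF (b + x / b) ^ n ≤ exp (x / 4) ^ n := by
        refine pow_le_pow_left₀ (stdNormalCDF_nonneg _)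
          ((stdNormalCDF_le_exp (hhalf.trans hneg)).trans (exp_le_exp.2 ?_)) n
        linarith
    _ = exp (n * (x / 4)) := (exp_nat_mul _ _).symm
    _ ≤ exp x := by
        rw [exp_le_exp]
        nlinarith [h.four_le_natCast hb]

lemma sq_mul_abs_stdNormalCDF_pow_sub_le_of_le (h : IsNormingConstant n b) (hb : 1 ≤ b)
    (hx : x ≤ -(2 * b ^ 2)) :
    b ^ 2 * |stdNormalCDF (b + x / b) ^ n - exp (-exp (-x))| ≤ (1 + x ^ 2) * exp x := by
  have hdiff : |stdNormalCDF (b + x / b) ^ n - exp (-exp (-x))| ≤ exp x :=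
    abs_sub_le_of_nonneg_of_le (pow_nonneg (stdNormalCDF_nonneg _) n)
      (h.stdNormalCDF_pow_le_exp hb hx) (exp_nonneg _) (exp_neg_exp_neg_le_exp x)
  gcongr
  nlinarith [sq_nonneg (x + 1)]

lemma sq_mul_abs_stdNormalCDF_pow_sub_le_dominating (h : IsNormingConstant n b) (hb : 1 ≤ b)
    (x : ℝ) :
    b ^ 2 * |stdNormalCDF (b + x / b) ^ n - exp (-exp (-x))| ≤
      3 * exp 25 * ((1 + x ^ 2) * exp (-|x|)) := by
  have hbn : b ^ 2 ≤ n := (pow_le_pow_right₀ hb (by norm_num)).trans h.pow_three_le_natCast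
  have hexp : 1 ≤ exp 25 := one_le_exp (by norm_num)
  have hg : 0 ≤ (1 + x ^ 2) * exp (-|x|) := by positivity
  rcases le_total 0 x with hx | hx
  · refine (h.sq_mul_abs_stdNormalCDF_pow_sub_le_of_nonneg hbn hx).trans ?_
    rw [abs_of_nonneg hx] at hg ⊢
    nlinarith
  rw [abs_of_nonpos hx, neg_neg] at hg ⊢
  rcases le_total (-(2 * b ^ 2)) x with hbx | hbx
  · exact h.sq_mul_abs_stdNormalCDF_pow_sub_le_of_nonpos hbn hx hbx
  · refine (h.sq_mul_abs_stdNormalCDF_pow_sub_le_of_le hb hbx).trans (le_mul_of_one_le_left hg ?_)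
    linarith

end IsNormingConstant

end Domination

section Limit

variable {b : ℕ → ℝ}

lemma tendsto_sq_mul_exp_neg_exceedanceRate_sub (hb : Tendsto b atTop atTop) (x : ℝ) :
    Tendsto (fun n => b n ^ 2 * (exp (-exceedanceRate (1 / b n ^ 2) x) - exp (-exp (-x)))) atTop
      (𝓝 (exp (-exp (-x)) * exceedanceDeficit x)) := by
  have hb_sq : Tendsto (fun n => b n ^ 2) atTop atTop := (tendsto_pow_atTop two_ne_zero).comp hb
  have hderiv := (hasDerivWithinAt_exceedanceRate_zero x).fun_neg.exp
  rw [hasDerivWithinAt_iff_tendsto_slope' self_notMem_Ioi, exceedanceRate_zero, neg_neg] at hderiv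
  refine (hderiv.comp (tendsto_inv_atTop_nhdsGT_zero.comp hb_sq)).congr fun n => ?_
  simp only [Function.comp_apply, slope_def_field, exceedanceRate_zero, sub_zero, one_div,
    div_inv_eq_mul, mul_comm]

lemma tendsto_sq_mul_exp_neg_exceedanceRate_sub_stdNormalCDF_pow
    (hb : ∀ᶠ n in atTop, IsNormingConstant n (b n)) (x : ℝ) :
    Tendsto (fun n => b n ^ 2 * (exp (-exceedanceRate (1 / b n ^ 2) x) -
      stdNormalCDF (b n + x / b n) ^ n)) atTop (𝓝 0) := by
  have hb_atTop := tendsto_atTop_of_isNormingConstant hb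
  have hbound : Tendsto (fun n => exp (-x) ^ 2 * (b n)⁻¹) atTop (𝓝 0) := by
    simpa using hb_atTop.inv_tendsto_atTop.const_mul (exp (-x) ^ 2)
  refine squeeze_zero' ?_ ?_ hbound
  · filter_upwards [hb] with n hn
    exact mul_nonneg (sq_nonneg _) (sub_nonneg.2 (hn.stdNormalCDF_pow_le x))
  · filter_upwards [hb] with n hn
    have := hn.pos
    have hT : exp (-exceedanceRate (1 / b n ^ 2) x) ≤ 1 :=
      exp_le_one_iff.2 (neg_nonpos.2 (exceedanceRate_nonneg _ x))
    have hratio : b n ^ 2 / n ≤ (b n)⁻¹ := by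
      rw [inv_eq_one_div, div_le_div_iff₀ hn.natCast_pos hn.pos]
      linarith [hn.pow_three_le_natCast]
    calc _ ≤ b n ^ 2 * (exp (-x) ^ 2 / n * 1) := by
          gcongr
          exact (hn.exp_neg_exceedanceRate_sub_stdNormalCDF_pow_le x).trans (by gcongr)
      _ = exp (-x) ^ 2 * (b n ^ 2 / n) := by ring
      _ ≤ exp (-x) ^ 2 * (b n)⁻¹ := by gcongr

lemma tendsto_sq_mul_stdNormalCDF_pow_sub
    (hb : ∀ᶠ n in atTop, IsNormingConstant n (b n)) (x : ℝ) :
    Tendsto (fun n => b n ^ 2 * (stdNormalCDF (b n + x / b n) ^ n - exp (-exp (-x)))) atTop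
      (𝓝 (exp (-exp (-x)) * exceedanceDeficit x)) := by
  have hmain := tendsto_sq_mul_exp_neg_exceedanceRate_sub
    (tendsto_atTop_of_isNormingConstant hb) x
  have herror := tendsto_sq_mul_exp_neg_exceedanceRate_sub_stdNormalCDF_pow hb x
  simpa only [← mul_sub, sub_sub_sub_cancel_left, sub_zero] using hmain.sub herror

lemma exp_neg_exp_neg_mul_exceedanceDeficit (x : ℝ) :
    exp (-exp (-x)) * exceedanceDeficit x = gumbelPDF x * (1 / 2 * x ^ 2 + 1 * x + 1) := by
  rw [exceedanceDeficit, gumbelPDF, sub_eq_add_neg, exp_add]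
  ring

lemma tendsto_sq_mul_integral_abs_sub (hb : ∀ᶠ n in atTop, IsNormingConstant n (b n)) :
    Tendsto (fun n => b n ^ 2 * ∫ x, |stdNormalCDF (b n + x / b n) ^ n - exp (-exp (-x))|) atTop
      (𝓝 ((6 * (eulerMascheroniConstant ^ 2 + 2 * eulerMascheroniConstant + 2) + π ^ 2) / 12)) := by
  have hlimit : ∫ x, exp (-exp (-x)) * exceedanceDeficit x =
      (6 * (eulerMascheroniConstant ^ 2 + 2 * eulerMascheroniConstant + 2) + π ^ 2) / 12 := by
    simp only [exp_neg_exp_neg_mul_exceedanceDeficit]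
    rw [← integral_gumbelMeasure, integral_quadratic_gumbelMeasure]
    ring
  have hb_large := (tendsto_atTop_of_isNormingConstant hb).eventually_ge_atTop 1
  simp only [← hlimit, ← integral_const_mul]
  refine tendsto_integral_filter_of_dominated_convergence _ ?_ ?_
    (integrable_one_add_sq_mul_exp_neg_abs.const_mul (3 * exp 25)) (ae_of_all _ fun x => ?_)
  · have := measurable_stdNormalCDF
    exact Eventually.of_forall fun n => (by fun_prop : Measurable _).aestronglyMeasurable
  · filter_upwards [hb, hb_large] with n hn hn_large
    refine ae_of_all _ fun x => ?_
    rw [norm_of_nonneg (by positivity)]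
    exact hn.sq_mul_abs_stdNormalCDF_pow_sub_le_dominating hn_large x
  · have := (tendsto_sq_mul_stdNormalCDF_pow_sub hb x).abs
    rw [abs_of_nonneg (mul_nonneg (exp_nonneg _) (exceedanceDeficit_nonneg x))] at this
    simpa only [abs_mul, abs_sq] using this

end Limit

/-- If `b_n > 0` solves `2π b_n² exp(b_n²) = n²` and `Y_n = b_n(X_{(n)} - b_n)`, then
`W₁(L(Y_n), Λ) = ((6(γ² + 2γ + 2) + π²)/(24 log n)) (1 + o(1))`. -/
theorem hall_w1 (b : ℕ → ℝ)
    (hb : ∀ n : ℕ, 1 ≤ n → 0 < b n ∧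
      2 * Real.pi * (b n) ^ 2 * Real.exp ((b n) ^ 2) = (n : ℝ) ^ 2) :
    Tendsto (fun n : ℕ =>
        (∫ x : ℝ, |stdNormalCDF (b n + x / b n) ^ n - Real.exp (-Real.exp (-x))|) /
          ((6 * (Real.eulerMascheroniConstant ^ 2 + 2 * Real.eulerMascheroniConstant + 2) +
              Real.pi ^ 2) / (24 * Real.log n)))
      atTop (nhds 1) := by
  have hnorming : ∀ᶠ n in atTop, IsNormingConstant n (b n) := by
    filter_upwards [eventually_ge_atTop 1] with n hn using ⟨(hb n hn).1, (hb n hn).2⟩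
  have hdist := tendsto_sq_mul_integral_abs_sub hnorming
  have hlog := tendsto_two_mul_log_div_sq_of_isNormingConstant hnorming
  set C := 6 * (eulerMascheroniConstant ^ 2 + 2 * eulerMascheroniConstant + 2) + π ^ 2
  have hC : C ≠ 0 := by
    have : 0 < C := by nlinarith [sq_nonneg (eulerMascheroniConstant + 1), sq_pos_of_pos pi_pos]
    exact this.ne'
  have hproduct := (hdist.div_const (C / 12)).mul hlog
  rw [div_self (by positivity), mul_one] at hproduct
  refine hproduct.congr' ?_
  filter_upwards [hnorming] with n hn
  have := hn.pos
  field_simp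
  ring
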